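/- arXiv:2002.00558 — 7 statements merged into one kernel-verified Lean document; each statement's English description precedes it below -/
import Mathlib

section
/- Let μ, θ, μ̂ be real-valued random variables on a common probability space such that the pair (μ̂, θ) has the same joint distribution as the pair (μ, θ). If Pr[|θ − μ| ≥ ε] ≤ δ for some ε, δ > 0, then Pr[|μ̂ − μ| ≥ 2ε] ≤ 2δ. -/
open MeasureTheory

/-- **Posterior resampling concentration.** If the pair `(μ̂, θ)` has the same joint
distribution as `(μ, θ)` and `Pr[|θ − μ| ≥ ε] ≤ δ`, then `Pr[|μ̂ − μ| ≥ 2ε] ≤ 2δ`. -/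
theorem stmt0 {Ω : Type*} [MeasurableSpace Ω] (P : Measure Ω) [IsProbabilityMeasure P]
    (μ θ μhat : Ω → ℝ) (hμ : Measurable μ) (hθ : Measurable θ) (hμhat : Measurable μhat)
    (hdist : Measure.map (fun ω => (μhat ω, θ ω)) P = Measure.map (fun ω => (μ ω, θ ω)) P)
    (ε δ : ℝ) (hε : 0 < ε) (hδ : 0 < δ)
    (h : P {ω | ε ≤ |θ ω - μ ω|} ≤ ENNReal.ofReal δ) :
    P {ω | 2 * ε ≤ |μhat ω - μ ω|} ≤ ENNReal.ofReal (2 * δ) := by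
  have hS : MeasurableSet {p : ℝ × ℝ | ε ≤ |p.2 - p.1|} := by
    apply measurableSet_le measurable_const
    exact (continuous_abs.comp (continuous_snd.sub continuous_fst)).measurable
  have h2 : P {ω | ε ≤ |θ ω - μhat ω|} = P {ω | ε ≤ |θ ω - μ ω|} := by
    have e := congrArg (fun m => m {p : ℝ × ℝ | ε ≤ |p.2 - p.1|}) hdist
    simp only [Measure.map_apply (hμhat.prodMk hθ) hS,
      Measure.map_apply (hμ.prodMk hθ) hS] at e
    exact e
  have hsub : {ω | 2 * ε ≤ |μhat ω - μ ω|} ⊆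
      {ω | ε ≤ |θ ω - μhat ω|} ∪ {ω | ε ≤ |θ ω - μ ω|} := by
    intro ω hω
    simp only [Set.mem_union, Set.mem_setOf_eq] at hω ⊢
    by_contra! hc
    have ht := abs_sub_le (μhat ω) (θ ω) (μ ω)
    rw [abs_sub_comm (μhat ω) (θ ω)] at ht
    linarith [hc.1, hc.2]
  calc P {ω | 2 * ε ≤ |μhat ω - μ ω|}
      ≤ P ({ω | ε ≤ |θ ω - μhat ω|} ∪ {ω | ε ≤ |θ ω - μ ω|}) := measure_mono hsub
    _ ≤ P {ω | ε ≤ |θ ω - μhat ω|} + P {ω | ε ≤ |θ ω - μ ω|} := measure_union_le _ _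
    _ ≤ ENNReal.ofReal δ + ENNReal.ofReal δ := add_le_add (h2.trans_le h) h
    _ = ENNReal.ofReal (2 * δ) := by
        rw [← ENNReal.ofReal_add hδ.le hδ.le, two_mul]
end

section
/- Let P be a probability measure on [0,1]. Let μ be a random variable with law P and, conditionally on μ, let S have the binomial distribution with n trials and success probability μ. Let μ̂ be a real-valued random variable on the same probability space such that the pair (μ̂, S) has the same joint distribution as the pair (μ, S). Then for every ε > 0, Pr[|μ̂ − μ| ≥ 2ε] ≤ 4·exp(−2nε²). -/
open MeasureTheory

lemma hoeff_scalar (p t : ℝ) (hp : p ∈ Set.Icc (0:ℝ) 1) :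
    p * Real.exp t + (1 - p) ≤ Real.exp (t * p + t ^ 2 / 8) := by
  obtain ⟨h0, h1⟩ := hp
  set ν : Measure ℝ := ENNReal.ofReal p • Measure.dirac 1 + ENNReal.ofReal (1 - p) • Measure.dirac 0 with hν
  have hprob : IsProbabilityMeasure ν := ⟨by
    simp only [hν, Measure.add_apply, Measure.smul_apply, measure_univ, smul_eq_mul, mul_one]
    rw [← ENNReal.ofReal_add h0 (by linarith)]; simp⟩
  have hint : ∀ f : ℝ → ℝ, ∫ x, f x ∂ν = p * f 1 + (1 - p) * f 0 := by
    intro f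
    rw [hν, integral_add_measure, integral_smul_measure, integral_smul_measure]
    · simp [ENNReal.toReal_ofReal h0, ENNReal.toReal_ofReal (sub_nonneg.2 h1)]
    · exact (integrable_dirac (by simp)).smul_measure (by simp)
    · exact (integrable_dirac (by simp)).smul_measure (by simp)
  have hb : ∀ᵐ x ∂ν, (fun x : ℝ => x) x ∈ Set.Icc (0:ℝ) 1 := by
    rw [hν, ae_add_measure_iff]
    constructor
    · apply Measure.ae_smul_measure
      rw [ae_dirac_eq]; simp
    · apply Measure.ae_smul_measure
      rw [ae_dirac_eq]; simp
  have h := (ProbabilityTheory.hasSubgaussianMGF_of_mem_Icc (μ := ν) (X := fun x => x)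
    aemeasurable_id hb).mgf_le t
  rw [ProbabilityTheory.mgf, hint, hint] at h
  simp only [mul_one, mul_zero, add_zero, sub_zero, nnnorm_one] at h
  have e1 : Real.exp (t * (1 - p)) = Real.exp t * Real.exp (-(t * p)) := by
    rw [← Real.exp_add]; ring_nf
  have e2 : Real.exp (t * (0 - p)) = Real.exp (-(t * p)) := by ring_nf
  rw [e1, e2] at h
  rw [Real.exp_add]
  have e3 : Real.exp (t * p) * Real.exp (-(t * p)) = 1 := by
    rw [← Real.exp_add]; simp
  have h' := mul_le_mul_of_nonneg_left h (Real.exp_pos (t * p)).le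
  calc _ = (p * Real.exp t + (1 - p)) * (Real.exp (t * p) * Real.exp (-(t * p))) := by
        rw [e3, mul_one]
    _ = Real.exp (t * p) * (p * (Real.exp t * Real.exp (-(t * p))) + (1 - p) * Real.exp (-(t * p))) := by
      ring
    _ ≤ _ := h'
    _ = _ := by
      congr 2
      push_cast
      ring

lemma binom_mgf (n : ℕ) (p t : ℝ) (hp : p ∈ Set.Icc (0:ℝ) 1) :
    ∑ k ∈ Finset.range (n + 1), ((n.choose k : ℝ) * p ^ k * (1 - p) ^ (n - k)) *
      Real.exp (t * (k - n * p)) ≤ Real.exp (n * (t ^ 2 / 8)) := by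
  have h := hoeff_scalar p t hp
  have h0 : 0 ≤ p * Real.exp t + (1 - p) := by
    have := hp.1; have := hp.2; have := Real.exp_pos t; nlinarith [mul_nonneg hp.1 this.le]
  have h2 := pow_le_pow_left₀ h0 h n
  rw [← Real.exp_nat_mul, add_pow] at h2
  have h3 := mul_le_mul_of_nonneg_left h2 (Real.exp_pos (-(n * (t * p)))).le
  rw [← Real.exp_add, Finset.mul_sum] at h3
  have e : -(n * (t * p)) + n * (t * p + t ^ 2 / 8) = n * (t ^ 2 / 8) := by ring
  rw [e] at h3
  refine le_trans (le_of_eq (Finset.sum_congr rfl fun k _ => ?_)) h3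
  rw [mul_pow, ← Real.exp_nat_mul]
  have : Real.exp (t * (k - n * p)) = Real.exp (-(n * (t * p))) * Real.exp (k * t) := by
    rw [← Real.exp_add]; ring_nf
  rw [this]; ring

lemma binom_tail (n : ℕ) (p ε : ℝ) (hp : p ∈ Set.Icc (0:ℝ) 1) (hε : 0 < ε) :
    ∑ k ∈ Finset.range (n + 1), (if n * ε ≤ |(k:ℝ) - n * p| then
      ((n.choose k : ℝ) * p ^ k * (1 - p) ^ (n - k)) else 0) ≤
      2 * Real.exp (-2 * n * ε ^ 2) := by
  have ha := mul_le_mul_of_nonneg_left (binom_mgf n p (4 * ε) hp)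
    (Real.exp_pos (-(4 * ε * (n * ε)))).le
  have hb := mul_le_mul_of_nonneg_left (binom_mgf n p (-(4 * ε)) hp)
    (Real.exp_pos (-(4 * ε * (n * ε)))).le
  rw [← Real.exp_add, Finset.mul_sum] at ha hb
  have hea : -(4 * ε * (n * ε)) + n * ((4 * ε) ^ 2 / 8) = -2 * n * ε ^ 2 := by ring
  have heb : -(4 * ε * (n * ε)) + n * ((-(4 * ε)) ^ 2 / 8) = -2 * n * ε ^ 2 := by ring
  rw [hea] at ha
  rw [heb] at hb
  rw [two_mul]
  refine le_trans ?_ (add_le_add ha hb)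
  rw [← Finset.sum_add_distrib]
  refine Finset.sum_le_sum fun k _ => ?_
  have hw : 0 ≤ ((n.choose k : ℝ) * p ^ k * (1 - p) ^ (n - k)) := by
    have := hp.1; have : 0 ≤ 1 - p := sub_nonneg.2 hp.2
    positivity
  set w := ((n.choose k : ℝ) * p ^ k * (1 - p) ^ (n - k))
  have r : ∀ a b : ℝ, Real.exp a * (w * Real.exp b) = w * Real.exp (a + b) := by
    intro a b; rw [Real.exp_add]; ring
  rw [r, r]
  split_ifs with hk
  · rcases le_abs'.1 hk with h | h
    · have : 1 ≤ Real.exp (-(4 * ε * (n * ε)) + -(4 * ε) * (k - n * p)) := by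
        apply Real.one_le_exp; nlinarith
      have := le_mul_of_one_le_right hw this
      have := mul_nonneg hw (Real.exp_pos (-(4 * ε * (n * ε)) + (4 * ε) * (k - n * p))).le
      linarith
    · have : 1 ≤ Real.exp (-(4 * ε * (n * ε)) + (4 * ε) * (k - n * p)) := by
        apply Real.one_le_exp; nlinarith
      have := le_mul_of_one_le_right hw this
      have := mul_nonneg hw (Real.exp_pos (-(4 * ε * (n * ε)) + -(4 * ε) * (k - n * p))).le
      linarith
  · positivity

/-- **Bayesian Chernoff bound for Bernoulli rewards.** `μ` is drawn from a prior on `[0,1]`,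
`S` is binomially distributed with `n` trials and success probability `μ` conditionally
on `μ`, and `μ̂` is a posterior sample, i.e. `(μ̂, S)` has the same joint law as `(μ, S)`.
Then `Pr[|μ̂ − μ| ≥ 2ε] ≤ 4 exp(−2nε²)`. -/
theorem stmt1 {Ω : Type*} [MeasurableSpace Ω] (P : Measure Ω) [IsProbabilityMeasure P]
    (μ μhat : Ω → ℝ) (S : Ω → ℕ) (n : ℕ)
    (hμ : Measurable μ) (hμhat : Measurable μhat) (hS : Measurable S)
    (hrange : ∀ᵐ ω ∂P, μ ω ∈ Set.Icc (0 : ℝ) 1)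
    (hcond : ∀ (A : Set ℝ), MeasurableSet A → ∀ k : ℕ,
      P (μ ⁻¹' A ∩ S ⁻¹' {k}) =
        ∫⁻ x in A, ENNReal.ofReal ((n.choose k : ℝ) * x ^ k * (1 - x) ^ (n - k))
          ∂(Measure.map μ P))
    (hdist : Measure.map (fun ω => (μhat ω, S ω)) P = Measure.map (fun ω => (μ ω, S ω)) P)
    (ε : ℝ) (hε : 0 < ε) :
    P {ω | 2 * ε ≤ |μhat ω - μ ω|} ≤ ENNReal.ofReal (4 * Real.exp (-2 * n * ε ^ 2)) := by
  set A : ℕ → Set ℝ := fun k => {x | n * ε ≤ |(k:ℝ) - n * x|} with hA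
  have hAm : ∀ k, MeasurableSet (A k) := fun k =>
    measurableSet_le measurable_const (by fun_prop)
  have key : P {ω | n * ε ≤ |(S ω : ℝ) - n * μ ω|} ≤
      ENNReal.ofReal (2 * Real.exp (-2 * n * ε ^ 2)) := by
    have hsub : {ω | n * ε ≤ |(S ω : ℝ) - n * μ ω|} ⊆ ⋃ k, (μ ⁻¹' (A k) ∩ S ⁻¹' {k}) := by
      intro ω hω
      simp only [Set.mem_iUnion]
      exact ⟨S ω, hω, rfl⟩
    have hprob : IsProbabilityMeasure (Measure.map μ P) :=
      Measure.isProbabilityMeasure_map hμ.aemeasurable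
    have hr : ∀ᵐ x ∂(Measure.map μ P), x ∈ Set.Icc (0:ℝ) 1 :=
      (ae_map_iff hμ.aemeasurable measurableSet_Icc).2 hrange
    calc _ ≤ _ := measure_mono hsub
      _ ≤ ∑' k, P (μ ⁻¹' (A k) ∩ S ⁻¹' {k}) := measure_iUnion_le _
      _ = ∑ k ∈ Finset.range (n + 1), P (μ ⁻¹' (A k) ∩ S ⁻¹' {k}) := by
        apply tsum_eq_sum
        intro k hk
        rw [hcond _ (hAm k), Nat.choose_eq_zero_of_lt (by simpa using hk)]
        simp
      _ = ∑ k ∈ Finset.range (n + 1), ∫⁻ x, (A k).indicator (fun x =>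
            ENNReal.ofReal ((n.choose k : ℝ) * x ^ k * (1 - x) ^ (n - k))) x
            ∂(Measure.map μ P) := by
        refine Finset.sum_congr rfl fun k _ => ?_
        rw [hcond _ (hAm k), lintegral_indicator (hAm k)]
      _ = ∫⁻ x, ∑ k ∈ Finset.range (n + 1), (A k).indicator (fun x =>
            ENNReal.ofReal ((n.choose k : ℝ) * x ^ k * (1 - x) ^ (n - k))) x
            ∂(Measure.map μ P) := by
        rw [lintegral_finsetSum]
        intro k _
        exact Measurable.indicator (by fun_prop) (hAm k)
      _ ≤ ∫⁻ x, ENNReal.ofReal (2 * Real.exp (-2 * n * ε ^ 2)) ∂(Measure.map μ P) := by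
        apply lintegral_mono_ae
        filter_upwards [hr] with x hx
        refine le_trans (le_of_eq ?_) (ENNReal.ofReal_le_ofReal (binom_tail n x ε hx hε))
        rw [ENNReal.ofReal_sum_of_nonneg]
        · refine Finset.sum_congr rfl fun k _ => ?_
          simp only [Set.indicator_apply, hA, Set.mem_ofPred_eq]
          split_ifs <;> simp
        · intro k _
          have := hx.1
          have : 0 ≤ 1 - x := sub_nonneg.2 hx.2
          split_ifs <;> positivity
      _ = _ := by simp
  have hB : MeasurableSet {q : ℝ × ℕ | n * ε ≤ |(q.2 : ℝ) - n * q.1|} :=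
    measurableSet_le measurable_const (by fun_prop)
  have key2 : P {ω | n * ε ≤ |(S ω : ℝ) - n * μhat ω|} =
      P {ω | n * ε ≤ |(S ω : ℝ) - n * μ ω|} := by
    have := congrArg (fun m => m {q : ℝ × ℕ | n * ε ≤ |(q.2 : ℝ) - n * q.1|}) hdist
    rw [Measure.map_apply (by fun_prop) hB, Measure.map_apply (by fun_prop) hB] at this
    exact this
  have hsub : {ω | 2 * ε ≤ |μhat ω - μ ω|} ⊆
      {ω | n * ε ≤ |(S ω : ℝ) - n * μhat ω|} ∪ {ω | n * ε ≤ |(S ω : ℝ) - n * μ ω|} := by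
    intro ω hω
    by_contra hc
    simp only [Set.mem_union, Set.mem_ofPred_eq, not_or, not_le] at hc hω
    have h1 := abs_sub (( S ω : ℝ) - n * μ ω) ((S ω : ℝ) - n * μhat ω)
    have h2 : ((S ω : ℝ) - n * μ ω) - ((S ω : ℝ) - n * μhat ω) = n * (μhat ω - μ ω) := by ring
    rw [h2, abs_mul, Nat.abs_cast] at h1
    have := mul_le_mul_of_nonneg_left hω (Nat.cast_nonneg (α := ℝ) n)
    linarith [hc.1, hc.2]
  calc _ ≤ _ := measure_mono hsub
    _ ≤ _ := measure_union_le _ _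
    _ ≤ ENNReal.ofReal (2 * Real.exp (-2 * n * ε ^ 2)) +
        ENNReal.ofReal (2 * Real.exp (-2 * n * ε ^ 2)) := by
      rw [key2]; exact add_le_add key key
    _ = _ := by
      rw [← ENNReal.ofReal_add (by positivity) (by positivity)]
      ring_nf
end

section
/- Let M ≥ 1 be a real number and let a, b satisfy 1 ≤ a ≤ M and 1 ≤ b ≤ M. If X has the Beta(a, b) distribution, then for every t ∈ (0, 1), t^M ≤ Pr[X > 1 − t] ≤ M·t. -/
open MeasureTheory

/-- The Beta(a, b) probability measure on `[0,1]`: the normalization of the measure on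
`(0,1)` with density `x^(a−1)·(1−x)^(b−1)` with respect to Lebesgue measure. -/
noncomputable def betaMeasure (a b : ℝ) : Measure ℝ :=
  (((volume.restrict (Set.Ioo (0 : ℝ) 1)).withDensity
      (fun x => ENNReal.ofReal (x ^ (a - 1) * (1 - x) ^ (b - 1)))) Set.univ)⁻¹ •
    (volume.restrict (Set.Ioo (0 : ℝ) 1)).withDensity
      (fun x => ENNReal.ofReal (x ^ (a - 1) * (1 - x) ^ (b - 1)))


lemma beta_cont (a b : ℝ) (ha : 1 ≤ a) (hb : 1 ≤ b) :
    Continuous (fun x : ℝ => x ^ (a - 1) * (1 - x) ^ (b - 1)) := by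
  refine Continuous.mul ?_ ?_
  · exact Real.continuous_rpow_const (by linarith)
  · exact (Real.continuous_rpow_const (by linarith)).comp (continuous_const.sub continuous_id)

lemma beta_lint (a b : ℝ) (ha : 1 ≤ a) (hb : 1 ≤ b) (c : ℝ) (hc : 0 ≤ c) (hc1 : c ≤ 1) :
    ∫⁻ x in Set.Ioo c 1, ENNReal.ofReal (x ^ (a - 1) * (1 - x) ^ (b - 1)) =
      ENNReal.ofReal (∫ x in c..1, x ^ (a - 1) * (1 - x) ^ (b - 1)) := by
  rw [intervalIntegral.integral_of_le hc1, integral_Ioc_eq_integral_Ioo,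
    ofReal_integral_eq_lintegral_ofReal]
  · exact ((beta_cont a b ha hb).continuousOn.integrableOn_compact
      (isCompact_Icc (a := c) (b := 1))).mono_set Set.Ioo_subset_Icc_self
  · refine ae_restrict_of_forall_mem measurableSet_Ioo (fun x hx ↦ ?_)
    have h1 := hx.1
    have h2 := hx.2
    exact mul_nonneg (Real.rpow_nonneg (by linarith) _) (Real.rpow_nonneg (by linarith) _)

lemma int_pow (a c d : ℝ) (ha : 1 ≤ a) : ∫ x in c..d, x ^ (a - 1) = (d ^ a - c ^ a) / a := by
  rw [integral_rpow (Or.inl (by linarith))]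
  simp

lemma int_pow' (b c d : ℝ) (hb : 1 ≤ b) :
    ∫ x in c..d, (1 - x) ^ (b - 1) = ((1 - c) ^ b - (1 - d) ^ b) / b := by
  rw [intervalIntegral.integral_comp_sub_left (fun x => x ^ (b - 1)) 1, int_pow b _ _ hb]

theorem stmt9 (M a b : ℝ) (hM : 1 ≤ M) (ha : 1 ≤ a) (haM : a ≤ M) (hb : 1 ≤ b) (hbM : b ≤ M)
    (t : ℝ) (ht : t ∈ Set.Ioo (0 : ℝ) 1) :
    ENNReal.ofReal (t ^ M) ≤ betaMeasure a b (Set.Ioi (1 - t)) ∧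
      betaMeasure a b (Set.Ioi (1 - t)) ≤ ENNReal.ofReal (M * t) := by
  obtain ⟨ht0, ht1⟩ := ht
  have hf := beta_cont a b ha hb
  have hca : Continuous (fun x : ℝ => x ^ (a - 1)) := Real.continuous_rpow_const (by linarith)
  have hcb : Continuous (fun x : ℝ => (1 - x) ^ (b - 1)) :=
    (Real.continuous_rpow_const (by linarith)).comp (continuous_const.sub continuous_id)
  set s := 1 - t with hs
  have hs0 : 0 < s := by linarith
  have hs1 : s < 1 := by linarith
  have hts : 1 - s = t := by linarith
  set A := ∫ x in (0:ℝ)..s, x ^ (a - 1) * (1 - x) ^ (b - 1) with hA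
  set B := ∫ x in s..1, x ^ (a - 1) * (1 - x) ^ (b - 1) with hB
  have hAB : ∫ x in (0:ℝ)..1, x ^ (a - 1) * (1 - x) ^ (b - 1) = A + B :=
    (intervalIntegral.integral_add_adjacent_intervals
      (hf.intervalIntegrable _ _) (hf.intervalIntegrable _ _)).symm
  have hb0 : (0:ℝ) < b := by linarith
  have ha0 : (0:ℝ) < a := by linarith
  have hsa : 0 < s ^ (a - 1) := Real.rpow_pos_of_pos hs0 _
  have htb : 0 < t ^ (b - 1) := Real.rpow_pos_of_pos ht0 _
  have hA1 : A ≤ s ^ (a - 1) * ((1 - t ^ b) / b) := by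
    have : ∫ x in (0:ℝ)..s, s ^ (a - 1) * (1 - x) ^ (b - 1) = s ^ (a - 1) * ((1 - t ^ b) / b) := by
      rw [intervalIntegral.integral_const_mul, int_pow' b _ _ hb, hts]; simp
    rw [← this]
    refine intervalIntegral.integral_mono_on hs0.le (hf.intervalIntegrable _ _)
      ((continuous_const.mul hcb).intervalIntegrable _ _) (fun x hx => ?_)
    exact mul_le_mul_of_nonneg_right (Real.rpow_le_rpow hx.1 hx.2 (by linarith))
      (Real.rpow_nonneg (by linarith [hx.2]) _)
  have hB1 : s ^ (a - 1) * (t ^ b / b) ≤ B := by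
    have : ∫ x in s..1, s ^ (a - 1) * (1 - x) ^ (b - 1) = s ^ (a - 1) * (t ^ b / b) := by
      rw [intervalIntegral.integral_const_mul, int_pow' b _ _ hb, hts]
      simp [Real.zero_rpow hb0.ne']
    rw [← this]
    refine intervalIntegral.integral_mono_on hs1.le
      ((continuous_const.mul hcb).intervalIntegrable _ _) (hf.intervalIntegrable _ _)
      (fun x hx => ?_)
    exact mul_le_mul_of_nonneg_right (Real.rpow_le_rpow hs0.le hx.1 (by linarith))
      (Real.rpow_nonneg (by linarith [hx.2]) _)
  have hA2 : (s ^ a / a) * t ^ (b - 1) ≤ A := by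
    have : ∫ x in (0:ℝ)..s, x ^ (a - 1) * t ^ (b - 1) = (s ^ a / a) * t ^ (b - 1) := by
      rw [intervalIntegral.integral_mul_const, int_pow a _ _ ha]
      simp [Real.zero_rpow ha0.ne']
    rw [← this]
    refine intervalIntegral.integral_mono_on hs0.le
      ((hca.mul continuous_const).intervalIntegrable _ _) (hf.intervalIntegrable _ _)
      (fun x hx => ?_)
    exact mul_le_mul_of_nonneg_left
      (Real.rpow_le_rpow ht0.le (by linarith [hx.2]) (by linarith))
      (Real.rpow_nonneg hx.1 _)
  have hB2 : B ≤ ((1 - s ^ a) / a) * t ^ (b - 1) := by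
    have : ∫ x in s..1, x ^ (a - 1) * t ^ (b - 1) = ((1 - s ^ a) / a) * t ^ (b - 1) := by
      rw [intervalIntegral.integral_mul_const, int_pow a _ _ ha]
      simp
    rw [← this]
    refine intervalIntegral.integral_mono_on hs1.le (hf.intervalIntegrable _ _)
      ((hca.mul continuous_const).intervalIntegrable _ _) (fun x hx => ?_)
    exact mul_le_mul_of_nonneg_left
      (Real.rpow_le_rpow (by linarith [hx.2]) (by linarith [hx.1]) (by linarith))
      (Real.rpow_nonneg (by linarith [hx.1]) _)
  have htb' : 0 < t ^ b := Real.rpow_pos_of_pos ht0 _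
  have htb1 : t ^ b ≤ 1 := Real.rpow_le_one ht0.le ht1.le hb0.le
  have hsa' : 0 < s ^ a := Real.rpow_pos_of_pos hs0 _
  have hsa1 : s ^ a ≤ 1 := Real.rpow_le_one hs0.le hs1.le ha0.le
  have hBpos : 0 < B := lt_of_lt_of_le (by positivity) hB1
  have hApos : 0 < A := lt_of_lt_of_le (by positivity) hA2
  have hlow : t ^ M * (A + B) ≤ B := by
    have h1 : t ^ M ≤ t ^ b := Real.rpow_le_rpow_of_exponent_ge ht0 ht1.le hbM
    have h2 : t ^ b * A ≤ (1 - t ^ b) * B := by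
      calc t ^ b * A ≤ t ^ b * (s ^ (a - 1) * ((1 - t ^ b) / b)) := by gcongr
        _ = (1 - t ^ b) * (s ^ (a - 1) * (t ^ b / b)) := by ring
        _ ≤ _ := mul_le_mul_of_nonneg_left hB1 (by linarith)
    have h3 : t ^ M * (A + B) ≤ t ^ b * (A + B) := by gcongr
    linarith
  have hup : B ≤ M * t * (A + B) := by
    have h1 : 1 - s ^ a ≤ a * t := by
      have := one_add_mul_self_le_rpow_one_add (s := -t) (by linarith) ha
      have h : 1 + -t = s := by rw [hs]; ring
      rw [h] at this
      linarith
    have h2 : s ^ a * B ≤ (1 - s ^ a) * A := by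
      calc s ^ a * B ≤ s ^ a * (((1 - s ^ a) / a) * t ^ (b - 1)) := by gcongr
        _ = (1 - s ^ a) * ((s ^ a / a) * t ^ (b - 1)) := by ring
        _ ≤ _ := mul_le_mul_of_nonneg_left hA2 (by linarith)
    have h3 : (1 - s ^ a) * (A + B) ≤ M * t * (A + B) := by
      have : a * t ≤ M * t := by gcongr
      exact mul_le_mul_of_nonneg_right (by linarith) (by linarith)
    linarith
  have hval : betaMeasure a b (Set.Ioi s) = ENNReal.ofReal (B / (A + B)) := by
    have hi : Set.Ioi s ∩ Set.Ioo 0 1 = Set.Ioo s 1 := by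
      ext x
      simp only [Set.mem_inter_iff, Set.mem_Ioi, Set.mem_Ioo]
      constructor
      · rintro ⟨h1, h2, h3⟩; exact ⟨h1, h3⟩
      · rintro ⟨h1, h2⟩; exact ⟨h1, hs0.trans h1, h2⟩
    rw [betaMeasure, Measure.smul_apply, smul_eq_mul, withDensity_apply _ MeasurableSet.univ,
      withDensity_apply _ measurableSet_Ioi, Measure.restrict_univ,
      Measure.restrict_restrict measurableSet_Ioi, hi,
      beta_lint a b ha hb 0 le_rfl zero_le_one, beta_lint a b ha hb s hs0.le hs1.le, hAB,
      ← ENNReal.ofReal_inv_of_pos (by positivity), ← ENNReal.ofReal_mul (by positivity)]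
    congr 1
    rw [div_eq_inv_mul]
  rw [hval]
  constructor
  · exact ENNReal.ofReal_le_ofReal ((le_div_iff₀ (by positivity)).2 hlow)
  · exact ENNReal.ofReal_le_ofReal ((div_le_iff₀ (by positivity)).2 hup)
end

section
/- Let M ≥ 1 and let Z have the Beta(1, M) distribution, i.e., the distribution on [0,1] with density M·(1 − z)^{M−1}. Then E[exp(M·Z/2)] ≤ 2. -/
open MeasureTheory

lemma aux_int (s : ℝ) (hs : 0 < s) :
    IntegrableOn (fun x : ℝ => (1 - x) ^ (s - 1)) (Set.Ioo 0 1) ∧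
    ∫ x in Set.Ioo (0 : ℝ) 1, (1 - x) ^ (s - 1) = 1 / s := by
  constructor
  · have h : IntervalIntegrable (fun x : ℝ => x ^ (s - 1)) volume 0 1 :=
      intervalIntegral.intervalIntegrable_rpow' (by linarith)
    have h2 := (h.comp_sub_left 1).symm
    simp only [sub_zero, sub_self] at h2
    exact (intervalIntegrable_iff_integrableOn_Ioo_of_le zero_le_one).1 h2
  · rw [← integral_Ioc_eq_integral_Ioo, ← intervalIntegral.integral_of_le zero_le_one,
      intervalIntegral.integral_comp_sub_left (fun x : ℝ => x ^ (s - 1)) 1,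
      integral_rpow (Or.inl (by linarith))]
    simp [hs.ne']

lemma aux_pt (M x : ℝ) (hM : 1 ≤ M) (hx : x ∈ Set.Ioo (0 : ℝ) 1) :
    (1 - x) ^ (M - 1) * Real.exp (M * x / 2) ≤ (1 - x) ^ (M / 2 - 1) := by
  have h1 : 0 < 1 - x := by linarith [hx.2]
  rw [Real.rpow_def_of_pos h1, Real.rpow_def_of_pos h1, ← Real.exp_add]
  apply Real.exp_le_exp.2
  have := Real.log_le_sub_one_of_pos h1
  nlinarith

/-- **Exponential-moment bound for Beta(1, M).** If `Z ~ Beta(1, M)` then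
`E[exp(M·Z/2)] ≤ 2`. -/
theorem stmt10 (M : ℝ) (hM : 1 ≤ M) :
    ∫ z, Real.exp (M * z / 2) ∂(betaMeasure 1 M) ≤ 2 := by
  have hM0 : 0 < M := by linarith
  obtain ⟨hi1, he1⟩ := aux_int M hM0
  obtain ⟨hi2, he2⟩ := aux_int (M / 2) (by linarith)
  have hnn : ∀ x ∈ Set.Ioo (0 : ℝ) 1, 0 ≤ (1 - x) ^ (M - 1) := fun x hx =>
    Real.rpow_nonneg (by linarith [hx.2]) _
  have hmass : ∫⁻ x in Set.Ioo (0 : ℝ) 1, ENNReal.ofReal ((1 - x) ^ (M - 1))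
      = ENNReal.ofReal (1 / M) := by
    rw [← he1, ofReal_integral_eq_lintegral_ofReal hi1
      (ae_restrict_of_forall_mem measurableSet_Ioo hnn)]
  have hmeas : Measurable (fun x : ℝ => ENNReal.ofReal ((1 - x) ^ (M - 1))) := by fun_prop
  unfold betaMeasure
  simp only [sub_self, Real.rpow_zero, one_mul]
  rw [integral_smul_measure, withDensity_apply _ MeasurableSet.univ, Measure.restrict_univ, hmass,
    integral_withDensity_eq_integral_toReal_smul hmeas (by simp), ENNReal.toReal_inv,
    ENNReal.toReal_ofReal (by positivity)]
  have hle : ∫ x in Set.Ioo (0 : ℝ) 1,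
      (ENNReal.ofReal ((1 - x) ^ (M - 1))).toReal • Real.exp (M * x / 2) ≤ 1 / (M / 2) := by
    rw [← he2]
    apply integral_mono_of_nonneg
    · exact Filter.Eventually.of_forall fun x => by
        simp only [smul_eq_mul, Pi.zero_apply]; positivity
    · exact hi2
    · refine ae_restrict_of_forall_mem measurableSet_Ioo fun x hx => ?_
      simp only [smul_eq_mul]
      rw [ENNReal.toReal_ofReal (hnn x hx)]
      exact aux_pt M x hM hx
  calc _ ≤ (1 / M)⁻¹ • (1 / (M / 2)) := by
        simp only [smul_eq_mul] at hle ⊢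
        exact mul_le_mul_of_nonneg_left hle (by positivity)
    _ = 2 := by simp only [smul_eq_mul]; field_simp
end

section
/- Let M ≥ 1 and let X have the Beta(1, M) distribution. Then E[(X − (1 − 1/M))₊] ≥ (1/(2M))·(2M)^{−M}. -/
open MeasureTheory

lemma aux_nu (M : ℝ) (hM : 1 ≤ M) (a : ℝ) (ha : 0 ≤ a) (ha1 : a ≤ 1) :
    ((volume.restrict (Set.Ioo (0 : ℝ) 1)).withDensity
      (fun x => ENNReal.ofReal (x ^ ((1:ℝ) - 1) * (1 - x) ^ (M - 1)))) (Set.Ioi a)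
      = ENNReal.ofReal ((1 - a) ^ M / M) := by
  have hc : Continuous (fun x : ℝ => (1 - x) ^ (M - 1)) :=
    (continuous_const.sub continuous_id).rpow_const (fun x => Or.inr (by linarith))
  rw [withDensity_apply _ measurableSet_Ioi, Measure.restrict_restrict measurableSet_Ioi]
  have hs : Set.Ioi a ∩ Set.Ioo 0 1 = Set.Ioo a 1 := by
    ext x
    simp only [Set.mem_inter_iff, Set.mem_Ioi, Set.mem_Ioo]
    constructor
    · rintro ⟨h1, h2, h3⟩
      exact ⟨h1, h3⟩
    · rintro ⟨h1, h3⟩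
      exact ⟨h1, by linarith, h3⟩
  rw [hs]
  simp only [sub_self, Real.rpow_zero, one_mul]
  rw [← ofReal_integral_eq_lintegral_ofReal, ← integral_Ioc_eq_integral_Ioo,
    ← intervalIntegral.integral_of_le ha1,
    intervalIntegral.integral_comp_sub_left (fun x => x ^ (M - 1)) 1,
    integral_rpow (Or.inl (by linarith))]
  · simp [Real.zero_rpow (show M ≠ 0 by linarith)]
  · exact (hc.integrableOn_Icc (a := a) (b := 1)).mono_set Set.Ioo_subset_Icc_self
  · refine ae_restrict_of_forall_mem measurableSet_Ioo (fun x hx ↦ ?_)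
    exact Real.rpow_nonneg (by linarith [hx.2]) _

/-- **Beta part of Lemma 5.7 (δ-easiness of bounded-strength Beta priors).** If
`X ~ Beta(1, M)` then `E[(X − (1 − 1/M))₊] ≥ (1/(2M))·(2M)^(−M)`. -/
theorem stmt11 (M : ℝ) (hM : 1 ≤ M) :
    (1 / (2 * M)) * (2 * M) ^ (-M) ≤
      ∫ x, max (x - (1 - 1 / M)) 0 ∂(betaMeasure 1 M) := by
  have hM0 : 0 < M := by linarith
  have key := aux_nu M hM
  unfold betaMeasure
  set ν := (volume.restrict (Set.Ioo (0 : ℝ) 1)).withDensity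
      (fun x => ENNReal.ofReal (x ^ ((1:ℝ) - 1) * (1 - x) ^ (M - 1))) with hν
  have hac : ν ≪ volume.restrict (Set.Ioo (0 : ℝ) 1) := withDensity_absolutelyContinuous _ _
  have hae : ∀ᵐ x ∂ν, x ∈ Set.Ioo (0 : ℝ) 1 :=
    hac.ae_le (ae_restrict_mem measurableSet_Ioo)
  have huniv : ν Set.univ = ENNReal.ofReal (1 / M) := by
    have h := key 0 le_rfl zero_le_one
    simp only [sub_zero, Real.one_rpow] at h
    rw [← h]
    refine measure_congr ?_
    filter_upwards [hae] with x hx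
    exact propext ⟨fun _ => hx.1, fun _ => trivial⟩
  have hfin : IsFiniteMeasure ν := ⟨by rw [huniv]; exact ENNReal.ofReal_lt_top⟩
  rw [huniv, integral_smul_measure]
  have hint : Integrable (fun x : ℝ => max (x - (1 - 1 / M)) 0) ν := by
    refine Integrable.of_bound (C := 1) (by fun_prop) ?_
    filter_upwards [hae] with x hx
    have h1 : 1 / M ≤ 1 := by rw [div_le_one hM0]; exact hM
    rw [Real.norm_eq_abs, abs_of_nonneg (le_max_right _ _)]
    exact max_le (by linarith [hx.2]) zero_le_one
  have hmk := mul_meas_ge_le_integral_of_nonneg (μ := ν)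
    (f := fun x : ℝ => max (x - (1 - 1 / M)) 0)
    (Filter.Eventually.of_forall fun x => le_max_right _ _) hint (1 / (2 * M))
  have hhalf : 1 / M = 1 / (2 * M) + 1 / (2 * M) := by field_simp; norm_num
  have hle1 : 1 / (2 * M) ≤ 1 := by rw [div_le_one (by linarith)]; linarith
  have hpos : 0 < 1 / (2 * M) := by positivity
  have hsub : ν.real (Set.Ioi (1 - 1 / (2 * M))) ≤
      ν.real {x : ℝ | 1 / (2 * M) ≤ max (x - (1 - 1 / M)) 0} := by
    refine measureReal_mono (fun x hx => ?_)
    have hx' : 1 - 1 / (2 * M) < x := hx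
    have h3 : 1 / (2 * M) ≤ x - (1 - 1 / M) := by rw [hhalf]; linarith
    exact le_trans h3 (le_max_left _ _)
  have hval : ν.real (Set.Ioi (1 - 1 / (2 * M))) = (2 * M) ^ (-M) / M := by
    rw [Measure.real, key _ (by linarith) (by linarith), sub_sub_cancel,
      ENNReal.toReal_ofReal (by positivity), one_div, Real.inv_rpow (by positivity),
      Real.rpow_neg (by positivity)]
  rw [hval] at hsub
  have h2 := (mul_le_mul_of_nonneg_left hsub hpos.le).trans hmk
  rw [ENNReal.toReal_inv, ENNReal.toReal_ofReal (by positivity), one_div M, inv_inv, smul_eq_mul]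
  rw [one_div M] at h2
  calc _ = M * (1 / (2 * M) * ((2 * M) ^ (-M) / M)) := by field_simp
    _ ≤ _ := mul_le_mul_of_nonneg_left h2 hM0.le
end

section
/- Let σ > 0 and let ν ≤ ν' be real numbers. Let G be the Gaussian measure on ℝ with mean ν and variance σ², and G' the Gaussian measure with mean ν' and variance σ². Let G̃ and G̃' be the conditional probability measures obtained by conditioning G and G', respectively, on the interval [0, 1] (these are well-defined since Gaussian measures assign positive mass to [0,1]). Then G̃' stochastically dominates G̃: for every t ∈ ℝ, G̃'([t, ∞)) ≥ G̃([t, ∞)). -/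
open MeasureTheory ProbabilityTheory
open scoped ENNReal NNReal

/-- Monotone likelihood ratio, in product form. -/
lemma gaussianPDFReal_mlr (v : ℝ≥0) (ν ν' : ℝ) (h : ν ≤ ν') (s x : ℝ) (hsx : s ≤ x) :
    gaussianPDFReal ν' v s * gaussianPDFReal ν v x ≤
      gaussianPDFReal ν' v x * gaussianPDFReal ν v s := by
  simp only [gaussianPDFReal]
  rw [mul_mul_mul_comm, mul_mul_mul_comm _ (Real.exp (-(x - ν') ^ 2 / (2 * (v : ℝ)))), ← Real.exp_add, ← Real.exp_add]
  refine mul_le_mul_of_nonneg_left (Real.exp_le_exp.2 ?_) (by positivity)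
  rw [← add_div, ← add_div]
  refine div_le_div_of_nonneg_right ?_ (by positivity)
  nlinarith [mul_nonneg (sub_nonneg.2 h) (sub_nonneg.2 hsx)]

lemma gaussianPDF_mlr (v : ℝ≥0) (ν ν' : ℝ) (h : ν ≤ ν') (s x : ℝ) (hsx : s ≤ x) :
    gaussianPDF ν' v s * gaussianPDF ν v x ≤ gaussianPDF ν' v x * gaussianPDF ν v s := by
  simp only [gaussianPDF]
  rw [← ENNReal.ofReal_mul (gaussianPDFReal_nonneg _ _ _),
    ← ENNReal.ofReal_mul (gaussianPDFReal_nonneg _ _ _)]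
  exact ENNReal.ofReal_le_ofReal (gaussianPDFReal_mlr v ν ν' h s x hsx)

/-- **Truncated Gaussians are stochastically ordered by their means (Lemma D.3).** Let
`G̃` and `G̃'` be the Gaussian measures with means `ν ≤ ν'` and common variance `σ² > 0`,
each conditioned on `[0,1]`. Then `G̃'` stochastically dominates `G̃`:
`G̃'([t, ∞)) ≥ G̃([t, ∞))` for every `t`. -/
theorem stmt14 (σ : ℝ≥0) (hσ : 0 < σ) (ν ν' : ℝ) (hνν' : ν ≤ ν') (t : ℝ) :
    (gaussianReal ν (σ ^ 2))[|Set.Icc (0 : ℝ) 1] (Set.Ici t) ≤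
      (gaussianReal ν' (σ ^ 2))[|Set.Icc (0 : ℝ) 1] (Set.Ici t) := by
  have hv : σ ^ 2 ≠ 0 := (pow_pos hσ 2).ne'
  generalize σ ^ 2 = v at hv
  rw [cond_apply measurableSet_Icc, cond_apply measurableSet_Icc]
  have hpos : ∀ m, gaussianReal m v (Set.Icc (0 : ℝ) 1) ≠ 0 := fun m h0 => by
    have := gaussianReal_absolutelyContinuous' m hv h0
    simp at this
  have hp := hpos ν
  have hp' := hpos ν'
  have hsplit : ∀ m, gaussianReal m v (Set.Icc (0 : ℝ) 1) =
      gaussianReal m v (Set.Icc (0 : ℝ) 1 ∩ Set.Ici t) +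
      gaussianReal m v (Set.Icc (0 : ℝ) 1 \ Set.Ici t) :=
    fun m => (measure_inter_add_sdiff _ measurableSet_Ici).symm
  have hA : gaussianPDF ν' v t * gaussianReal ν v (Set.Icc (0 : ℝ) 1 ∩ Set.Ici t) ≤
      gaussianReal ν' v (Set.Icc (0 : ℝ) 1 ∩ Set.Ici t) * gaussianPDF ν v t := by
    rw [gaussianReal_apply _ hv, gaussianReal_apply _ hv,
      ← lintegral_const_mul _ (measurable_gaussianPDF _ _),
      ← lintegral_mul_const _ (measurable_gaussianPDF _ _)]
    exact setLIntegral_mono' (measurableSet_Icc.inter measurableSet_Ici)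
      fun x hx => gaussianPDF_mlr v ν ν' hνν' t x hx.2
  have hB : gaussianReal ν' v (Set.Icc (0 : ℝ) 1 \ Set.Ici t) * gaussianPDF ν v t ≤
      gaussianPDF ν' v t * gaussianReal ν v (Set.Icc (0 : ℝ) 1 \ Set.Ici t) := by
    rw [gaussianReal_apply _ hv, gaussianReal_apply _ hv,
      ← lintegral_const_mul _ (measurable_gaussianPDF _ _),
      ← lintegral_mul_const _ (measurable_gaussianPDF _ _)]
    exact setLIntegral_mono' (measurableSet_Icc.diff measurableSet_Ici)
      fun x hx => gaussianPDF_mlr v ν ν' hνν' x t (le_of_lt (by simpa using hx.2))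
  have hf0 := (gaussianPDF_pos ν hv t).ne'
  have hft : gaussianPDF ν v t ≠ ∞ := gaussianPDF_ne_top
  have hS := hsplit ν
  have hS' := hsplit ν'
  have ht := measure_ne_top (gaussianReal ν v) (Set.Icc (0 : ℝ) 1)
  have ht' := measure_ne_top (gaussianReal ν' v) (Set.Icc (0 : ℝ) 1)
  generalize gaussianReal ν v (Set.Icc (0 : ℝ) 1) = S at *
  generalize gaussianReal ν' v (Set.Icc (0 : ℝ) 1) = S' at *
  generalize gaussianReal ν v (Set.Icc (0 : ℝ) 1 ∩ Set.Ici t) = a at *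
  generalize gaussianReal ν' v (Set.Icc (0 : ℝ) 1 ∩ Set.Ici t) = a' at *
  generalize gaussianReal ν v (Set.Icc (0 : ℝ) 1 \ Set.Ici t) = b at *
  generalize gaussianReal ν' v (Set.Icc (0 : ℝ) 1 \ Set.Ici t) = b' at *
  generalize gaussianPDF ν v t = f at *
  generalize gaussianPDF ν' v t = f' at *
  have key : a * b' ≤ a' * b := by
    refine (ENNReal.mul_le_mul_iff_left hf0 hft).1 ?_
    calc a * b' * f = a * (b' * f) := by ring
      _ ≤ a * (f' * b) := by gcongr
      _ = (f' * a) * b := by ring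
      _ ≤ (a' * f) * b := by gcongr
      _ = a' * b * f := by ring
  have key2 : a * S' ≤ a' * S := by
    rw [hS, hS', mul_add, mul_add, mul_comm a a']
    gcongr
  rw [mul_comm, mul_comm S'⁻¹, ← div_eq_mul_inv, ← div_eq_mul_inv,
    ENNReal.div_le_iff hp ht, div_eq_mul_inv, mul_right_comm, ← div_eq_mul_inv,
    ENNReal.le_div_iff_mul_le (Or.inl hp') (Or.inl ht')]
  exact key2
end

section
/- Let P be a probability measure on [0,1], let μ be a random variable with law P, and conditionally on μ let B_1, …, B_N be independent Bernoulli(μ) random variables. Let M = E[μ | B_1, …, B_N] be the posterior mean, and let N₀ ≤ N and let Z be the event {B_1 = ⋯ = B_{N₀} = 0}, assumed to have positive probability. Then the unconditional law of M stochastically dominates the conditional law of M given Z: for every t ∈ ℝ, Pr[M ≥ t | Z] ≤ Pr[M ≥ t]. -/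
open MeasureTheory ProbabilityTheory

/-- `B 0, …, B (N−1)` are, conditionally on `μ`, independent Bernoulli(`μ`) samples:
for every measurable `A ⊆ ℝ` and every outcome vector `b`, the joint probability is
given by integrating the Bernoulli likelihood against the law of `μ`. -/
def IsBernoulliSample {Ω : Type*} [MeasurableSpace Ω] (P : Measure Ω)
    (μ : Ω → ℝ) {N : ℕ} (B : Fin N → Ω → Bool) : Prop :=
  ∀ (A : Set ℝ), MeasurableSet A → ∀ b : Fin N → Bool,
    P (μ ⁻¹' A ∩ {ω | ∀ i, B i ω = b i}) =
      ∫⁻ x in A, ∏ i, ENNReal.ofReal (if b i then x else 1 - x) ∂(Measure.map μ P)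


noncomputable def bw (ν : Measure ℝ) (N k : ℕ) : ℝ := ∫ x, x ^ k * (1 - x) ^ (N - k) ∂ν

theorem bw_integrable (ν : Measure ℝ) [IsFiniteMeasure ν] (h : ∀ᵐ x ∂ν, x ∈ Set.Icc (0 : ℝ) 1)
    (N k : ℕ) : Integrable (fun x : ℝ => x ^ k * (1 - x) ^ (N - k)) ν := by
  refine Integrable.of_bound (C := 1) (by fun_prop) ?_
  filter_upwards [h] with x hx
  have h1 : 0 ≤ 1 - x := by linarith [hx.2]
  have h2 : 1 - x ≤ 1 := by linarith [hx.1]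
  have h3 := pow_le_one₀ hx.1 hx.2 (n := k)
  have h4 := pow_le_one₀ h1 h2 (n := N - k)
  have h5 := pow_nonneg hx.1 k
  have h6 := pow_nonneg h1 (N - k)
  rw [Real.norm_of_nonneg (by positivity)]
  nlinarith

theorem bw_pow_aux (u v : ℝ) (hu : 0 ≤ u) (hv : 0 ≤ v) (a b : ℕ) :
    u ^ a * v ^ b + u ^ b * v ^ a ≤ u ^ (a + b) + v ^ (a + b) := by
  have : 0 ≤ (u ^ a - v ^ a) * (u ^ b - v ^ b) := by
    rcases le_total u v with h | h
    · exact mul_nonneg_of_nonpos_of_nonpos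
        (sub_nonpos.2 (pow_le_pow_left₀ hu h a)) (sub_nonpos.2 (pow_le_pow_left₀ hu h b))
    · exact mul_nonneg
        (sub_nonneg.2 (pow_le_pow_left₀ hv h a)) (sub_nonneg.2 (pow_le_pow_left₀ hv h b))
  rw [pow_add, pow_add]
  nlinarith

theorem bw_logconvex (ν : Measure ℝ) [IsFiniteMeasure ν] (h : ∀ᵐ x ∂ν, x ∈ Set.Icc (0 : ℝ) 1)
    (N p a b : ℕ) (hN : p + a + b ≤ N) :
    bw ν N (p + a) * bw ν N (p + b) ≤ bw ν N p * bw ν N (p + a + b) := by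
  set f : ℕ → ℝ → ℝ := fun k x => x ^ k * (1 - x) ^ (N - k) with hf
  have hi : ∀ k, Integrable (f k) ν := fun k => bw_integrable ν h N k
  have hprod : ∀ k l, bw ν N k * bw ν N l = ∫ z, f k z.1 * f l z.2 ∂(ν.prod ν) := fun k l => by
    rw [integral_prod_mul]; rfl
  have hI : ∀ k l, Integrable (fun z : ℝ × ℝ => f k z.1 * f l z.2) (ν.prod ν) :=
    fun k l => (hi k).mul_prod (hi l)
  have h1 : ∀ᵐ z ∂(ν.prod ν), z.1 ∈ Set.Icc (0 : ℝ) 1 := Measure.quasiMeasurePreserving_fst.ae h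
  have h2 : ∀ᵐ z ∂(ν.prod ν), z.2 ∈ Set.Icc (0 : ℝ) 1 := Measure.quasiMeasurePreserving_snd.ae h
  have key : ∫ z, (f (p + a) z.1 * f (p + b) z.2 + f (p + b) z.1 * f (p + a) z.2) ∂(ν.prod ν) ≤
      ∫ z, (f p z.1 * f (p + a + b) z.2 + f (p + a + b) z.1 * f p z.2) ∂(ν.prod ν) := by
    refine integral_mono_ae ((hI _ _).add (hI _ _)) ((hI _ _).add (hI _ _)) ?_
    filter_upwards [h1, h2] with z hx hy
    obtain ⟨x, y⟩ := z
    simp only [Set.mem_Icc] at hx hy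
    obtain ⟨r, rfl⟩ := Nat.exists_eq_add_of_le hN
    have e1 : p + a + b + r - (p + a) = b + r := by omega
    have e2 : p + a + b + r - (p + b) = a + r := by omega
    have e3 : p + a + b + r - p = a + b + r := by omega
    have e4 : p + a + b + r - (p + a + b) = r := by omega
    simp only [hf, e1, e2, e3, e4]
    have hx' : 0 ≤ 1 - x := by linarith
    have hy' : 0 ≤ 1 - y := by linarith
    have := bw_pow_aux (x * (1 - y)) (y * (1 - x)) (mul_nonneg hx.1 hy') (mul_nonneg hy.1 hx') a b
    have hc : 0 ≤ x ^ p * y ^ p * (1 - x) ^ r * (1 - y) ^ r := by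
      have := hx.1
      have := hy.1
      positivity
    have := mul_le_mul_of_nonneg_left this hc
    simp only [mul_pow, pow_add] at this ⊢
    nlinarith
  rw [integral_add (hI _ _) (hI _ _), integral_add (hI _ _) (hI _ _), ← hprod, ← hprod,
    ← hprod, ← hprod] at key
  linarith [mul_comm (bw ν N (p + a)) (bw ν N (p + b)), mul_comm (bw ν N p) (bw ν N (p + a + b))]

theorem bw_split (ν : Measure ℝ) [IsFiniteMeasure ν] (h : ∀ᵐ x ∂ν, x ∈ Set.Icc (0 : ℝ) 1)
    (N k : ℕ) (hk : k ≤ N) : bw ν N k = bw ν (N + 1) k + bw ν (N + 1) (k + 1) := by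
  unfold bw
  rw [← integral_add (bw_integrable ν h _ _) (bw_integrable ν h _ _)]
  congr 1
  ext x
  have e1 : N + 1 - k = N - k + 1 := by omega
  have e2 : N + 1 - (k + 1) = N - k := by omega
  rw [e1, e2]
  ring

theorem bw_mean_mono (ν : Measure ℝ) [IsFiniteMeasure ν] (h : ∀ᵐ x ∂ν, x ∈ Set.Icc (0 : ℝ) 1)
    (N i j : ℕ) (hij : i ≤ j) (hj : j ≤ N) :
    bw ν (N + 1) (i + 1) * bw ν N j ≤ bw ν (N + 1) (j + 1) * bw ν N i := by
  rw [bw_split ν h N j hj, bw_split ν h N i (hij.trans hj)]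
  obtain ⟨d, rfl⟩ := Nat.exists_eq_add_of_le hij
  have := bw_logconvex ν h (N + 1) i 1 d (by omega)
  have e : i + 1 + d = i + d + 1 := by omega
  rw [e] at this
  nlinarith

def cnt {N : ℕ} (b : Fin N → Bool) : ℕ := ∑ i, (b i).toNat

theorem cnt_le {N : ℕ} (b : Fin N → Bool) : cnt b ≤ N := by
  calc cnt b ≤ ∑ _i : Fin N, 1 := Finset.sum_le_sum fun i _ => Bool.toNat_le _
    _ = N := by simp

theorem cnt_mono {N : ℕ} {b c : Fin N → Bool} (h : b ≤ c) : cnt b ≤ cnt c :=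
  Finset.sum_le_sum fun i _ => Bool.toNat_le_toNat (h i)

theorem cnt_inf_sup {N : ℕ} (b c : Fin N → Bool) : cnt (b ⊓ c) + cnt (b ⊔ c) = cnt b + cnt c := by
  unfold cnt
  rw [← Finset.sum_add_distrib, ← Finset.sum_add_distrib]
  refine Finset.sum_congr rfl fun i _ => ?_
  simp only [Pi.inf_apply, Pi.sup_apply]
  cases b i <;> cases c i <;> rfl

theorem prod_eq_cnt {N : ℕ} (b : Fin N → Bool) (x : ℝ) :
    ∏ i, (if b i then x else 1 - x) = x ^ cnt b * (1 - x) ^ (N - cnt b) := by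
  have h1 : ∀ i, (if b i then x else 1 - x) = x ^ (b i).toNat * (1 - x) ^ (1 - (b i).toNat) := by
    intro i; cases b i <;> simp
  have h2 : ∑ i, (1 - (b i).toNat) = N - cnt b := by
    have : ∑ i, (1 - (b i).toNat) + cnt b = N := by
      unfold cnt
      rw [← Finset.sum_add_distrib]
      calc _ = ∑ _i : Fin N, 1 := Finset.sum_congr rfl fun i _ => by cases b i <;> rfl
        _ = N := by simp
    omega
  rw [Finset.prod_congr rfl fun i _ => h1 i, Finset.prod_mul_distrib, Finset.prod_pow_eq_pow_sum,
    Finset.prod_pow_eq_pow_sum, h2]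
  rfl

theorem bw_fkg (ν : Measure ℝ) [IsFiniteMeasure ν] (h : ∀ᵐ x ∂ν, x ∈ Set.Icc (0 : ℝ) 1)
    {N : ℕ} (b c : Fin N → Bool) :
    bw ν N (cnt b) * bw ν N (cnt c) ≤ bw ν N (cnt (b ⊓ c)) * bw ν N (cnt (b ⊔ c)) := by
  have h1 := cnt_inf_sup b c
  obtain ⟨a, ha⟩ := Nat.exists_eq_add_of_le (cnt_mono (inf_le_left : b ⊓ c ≤ b))
  obtain ⟨d, hd⟩ := Nat.exists_eq_add_of_le (cnt_mono (inf_le_right : b ⊓ c ≤ c))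
  have h2 : cnt (b ⊔ c) = cnt (b ⊓ c) + a + d := by omega
  have h3 := cnt_le (b ⊔ c)
  rw [h2, ha, hd]
  exact bw_logconvex ν h N _ a d (by omega)

theorem bw_nonneg (ν : Measure ℝ) (h : ∀ᵐ x ∂ν, x ∈ Set.Icc (0 : ℝ) 1) (N k : ℕ) :
    0 ≤ bw ν N k := by
  refine integral_nonneg_of_ae ?_
  filter_upwards [h] with x hx
  have h1 : 0 ≤ 1 - x := by linarith [hx.2]
  have := hx.1
  simp only [Pi.zero_apply]
  positivity

theorem map_restrict {Ω : Type*} [MeasurableSpace Ω] (P : Measure Ω) [IsProbabilityMeasure P]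
    {N : ℕ} (μ : Ω → ℝ) (B : Fin N → Ω → Bool)
    (hμ : Measurable μ) (hB : ∀ i, Measurable (B i))
    (hrange : ∀ᵐ x ∂(P.map μ), x ∈ Set.Icc (0 : ℝ) 1)
    (hcond : IsBernoulliSample P μ B) (b : Fin N → Bool) :
    (P.restrict {ω | ∀ i, B i ω = b i}).map μ = (P.map μ).withDensity
      (fun x => ENNReal.ofReal (x ^ cnt b * (1 - x) ^ (N - cnt b))) := by
  ext A hA
  rw [Measure.map_apply hμ hA, Measure.restrict_apply (hμ hA), hcond A hA b,
    withDensity_apply _ hA]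
  refine lintegral_congr_ae (ae_restrict_of_ae ?_)
  filter_upwards [hrange] with x hx
  rw [← prod_eq_cnt, ENNReal.ofReal_prod_of_nonneg]
  intro i _
  split_ifs
  · exact hx.1
  · linarith [hx.2]

theorem integral_fiber {Ω : Type*} [MeasurableSpace Ω] (P : Measure Ω) [IsProbabilityMeasure P]
    {N : ℕ} (μ : Ω → ℝ) (B : Fin N → Ω → Bool)
    (hμ : Measurable μ) (hB : ∀ i, Measurable (B i))
    (hrange : ∀ᵐ x ∂(P.map μ), x ∈ Set.Icc (0 : ℝ) 1)
    (hcond : IsBernoulliSample P μ B) (b : Fin N → Bool) (g : ℝ → ℝ) (hg : Measurable g) :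
    ∫ ω in {ω | ∀ i, B i ω = b i}, g (μ ω) ∂P =
      ∫ x, x ^ cnt b * (1 - x) ^ (N - cnt b) * g x ∂(P.map μ) := by
  rw [← integral_map (φ := μ) hμ.aemeasurable hg.aestronglyMeasurable,
    map_restrict P μ B hμ hB hrange hcond b,
    integral_withDensity_eq_integral_toReal_smul (by fun_prop) (by simp)]
  refine integral_congr_ae ?_
  filter_upwards [hrange] with x hx
  have h1 : 0 ≤ 1 - x := by linarith [hx.2]
  have := hx.1
  rw [ENNReal.toReal_ofReal (by positivity), smul_eq_mul]

/-- **Conditioning on initial zero rewards lowers the posterior mean (Lemma B.11).**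
Let `μ` have a prior on `[0,1]`, let `B_1, …, B_N` be conditionally i.i.d. Bernoulli(μ)
samples, and let `M = E[μ | B_1, …, B_N]` be the posterior mean. If `Z` is the
positive-probability event that the first `N₀ ≤ N` samples all return reward `0`, then
for every `t`, `Pr[M ≥ t | Z] ≤ Pr[M ≥ t]`. -/
theorem stmt17 {Ω : Type*} [MeasurableSpace Ω] (P : Measure Ω) [IsProbabilityMeasure P]
    {N : ℕ} (μ : Ω → ℝ) (B : Fin N → Ω → Bool)
    (hμ : Measurable μ) (hB : ∀ i, Measurable (B i))
    (hrange : ∀ᵐ ω ∂P, μ ω ∈ Set.Icc (0 : ℝ) 1)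
    (hcond : IsBernoulliSample P μ B)
    (N₀ : ℕ) (hN₀ : N₀ ≤ N)
    (hZ : P {ω | ∀ i : Fin N, (i : ℕ) < N₀ → B i ω = false} ≠ 0)
    (t : ℝ) :
    P[|{ω | ∀ i : Fin N, (i : ℕ) < N₀ → B i ω = false}]
        {ω | t ≤ (P[μ|MeasurableSpace.comap (fun ω (i : Fin N) => B i ω) inferInstance]) ω}
      ≤ P {ω | t ≤
          (P[μ|MeasurableSpace.comap (fun ω (i : Fin N) => B i ω) inferInstance]) ω} := by
  classical
  set ν := P.map μ with hν
  have : IsProbabilityMeasure ν := Measure.isProbabilityMeasure_map hμ.aemeasurable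
  have hr : ∀ᵐ x ∂ν, x ∈ Set.Icc (0 : ℝ) 1 := by
    exact (ae_map_iff hμ.aemeasurable measurableSet_Icc).2 hrange
  set Bh : Ω → Fin N → Bool := fun ω i => B i ω with hBh
  have hBm : Measurable Bh := measurable_pi_iff.2 hB
  have hle := hBm.comap_le
  obtain ⟨g, hg, hMg⟩ : ∃ g : (Fin N → Bool) → ℝ, Measurable g ∧
      P[μ|MeasurableSpace.comap Bh inferInstance] = g ∘ Bh :=
    (stronglyMeasurable_condExp (m := MeasurableSpace.comap Bh inferInstance) (μ := P)
      (f := μ)).measurable.exists_eq_measurable_comp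
  have hint : Integrable μ P := by
    refine Integrable.of_bound (C := 1) hμ.aestronglyMeasurable ?_
    filter_upwards [hrange] with ω hω
    rw [Real.norm_of_nonneg hω.1]; exact hω.2
  have hfib : ∀ b, {ω | ∀ i, B i ω = b i} = Bh ⁻¹' {b} := by
    intro b; ext ω; simp [hBh, funext_iff]
  have hw : ∀ b, P.real (Bh ⁻¹' {b}) = bw ν N (cnt b) := by
    intro b
    have := integral_fiber P μ B hμ hB hr hcond b (fun _ => 1) measurable_const
    rw [hfib] at this
    simpa [bw] using this
  have hw1 : ∀ b, ∫ ω in Bh ⁻¹' {b}, μ ω ∂P = bw ν (N + 1) (cnt b + 1) := by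
    intro b
    have := integral_fiber P μ B hμ hB hr hcond b (fun x => x) measurable_id
    rw [hfib] at this
    rw [this]
    unfold bw
    congr 1
    ext x
    rw [show N + 1 - (cnt b + 1) = N - cnt b by omega]
    ring
  have hgw : ∀ b, bw ν N (cnt b) * g b = bw ν (N + 1) (cnt b + 1) := by
    intro b
    rw [← hw1 b, ← setIntegral_condExp hle hint ⟨{b}, measurableSet_singleton b, rfl⟩, hMg,
      setIntegral_congr_fun (g := fun _ => g b) (hBm (measurableSet_singleton b))]
    · simp [hw]
    · intro ω hω
      simp only [Set.mem_preimage, Set.mem_singleton_iff] at hω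
      simp [hω]
  have hsum : ∀ T : Set (Fin N → Bool),
      P.real (Bh ⁻¹' T) = ∑ b, bw ν N (cnt b) * T.indicator 1 b := by
    intro T
    have h1 : Bh ⁻¹' T = Bh ⁻¹' (T.toFinset : Set (Fin N → Bool)) := by simp
    rw [h1, measureReal_def, ← sum_measure_preimage_singleton _
      (fun b _ => hBm (measurableSet_singleton b)), ENNReal.toReal_sum (by simp)]
    simp only [← measureReal_def, hw]
    rw [← Finset.sum_subset (Finset.subset_univ T.toFinset)]
    · refine Finset.sum_congr rfl fun b hb => ?_
      rw [Set.mem_toFinset] at hb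
      simp [hb]
    · intro b _ hb
      rw [Set.mem_toFinset] at hb
      simp [hb]
  set S : Set (Fin N → Bool) := {b | t ≤ g b} with hS
  set S' : Set (Fin N → Bool) :=
    {b | ∃ c, cnt c ≤ cnt b ∧ 0 < bw ν N (cnt c) ∧ t ≤ g c} with hS'
  set Zs : Set (Fin N → Bool) := {b | ∀ i : Fin N, (i : ℕ) < N₀ → b i = false} with hZs
  have hnn : ∀ k, 0 ≤ bw ν N k := bw_nonneg ν hr N
  have hSS : ∀ b, 0 < bw ν N (cnt b) → (b ∈ S ↔ b ∈ S') := by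
    intro b hb
    constructor
    · exact fun h => ⟨b, le_rfl, hb, h⟩
    · rintro ⟨c, hcb, hc, htc⟩
      have h1 := bw_mean_mono ν hr N _ _ hcb (cnt_le b)
      rw [← hgw, ← hgw] at h1
      have h2 : (bw ν N (cnt b) * bw ν N (cnt c)) * g c ≤
          (bw ν N (cnt b) * bw ν N (cnt c)) * g b := by linarith
      exact htc.trans (le_of_mul_le_mul_left h2 (mul_pos hb hc))
  have hup : ∀ b c, b ≤ c → b ∈ S' → c ∈ S' := by
    rintro b c hbc ⟨d, h1, h2⟩
    exact ⟨d, h1.trans (cnt_mono hbc), h2⟩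
  have hdown : ∀ b c, b ≤ c → b ∈ Zsᶜ → c ∈ Zsᶜ := by
    intro b c hbc hb hc
    refine hb fun i hi => ?_
    have h1 := hbc i
    rw [hc i hi] at h1
    exact le_bot_iff.1 h1
  have hmon : ∀ T : Set (Fin N → Bool), (∀ b c, b ≤ c → b ∈ T → c ∈ T) →
      Monotone (T.indicator (1 : (Fin N → Bool) → ℝ)) := by
    intro T hT b c hbc
    by_cases hb : b ∈ T
    · simp [hb, hT b c hbc hb]
    · simp only [Set.indicator_of_notMem hb]
      exact Set.indicator_nonneg (fun _ _ => zero_le_one) _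
  have hfkg := fkg (S'.indicator (1 : (Fin N → Bool) → ℝ))
    (Zsᶜ.indicator (1 : (Fin N → Bool) → ℝ)) (fun b => bw ν N (cnt b)) (fun b => hnn _)
    (fun b => Set.indicator_nonneg (fun _ _ => zero_le_one) _)
    (fun b => Set.indicator_nonneg (fun _ _ => zero_le_one) _)
    (hmon _ hup) (hmon _ hdown) (fun b c => bw_fkg ν hr b c)
  have hone : ∑ b : Fin N → Bool, bw ν N (cnt b) = 1 := by
    have := hsum Set.univ
    simpa using this.symm
  have hcap : ∀ b, S'.indicator (1 : (Fin N → Bool) → ℝ) b *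
      Zsᶜ.indicator (1 : (Fin N → Bool) → ℝ) b = (S' \ Zs).indicator 1 b := by
    intro b
    by_cases h1 : b ∈ S' <;> by_cases h2 : b ∈ Zs <;> simp [h1, h2]
  simp only [hcap, hone, one_mul, ← hsum] at hfkg
  have hZm : MeasurableSet (Bh ⁻¹' Zs) := hBm (Set.toFinite Zs).measurableSet
  have hcompl : P.real (Bh ⁻¹' Zsᶜ) = 1 - P.real (Bh ⁻¹' Zs) := by
    rw [Set.preimage_compl, probReal_compl_eq_one_sub hZm]
  have hdiff : P.real (Bh ⁻¹' (S' \ Zs)) = P.real (Bh ⁻¹' S') - P.real (Bh ⁻¹' (Zs ∩ S')) := by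
    have := measureReal_inter_add_sdiff (μ := P) (s := Bh ⁻¹' S') hZm
    rw [Set.preimage_sdiff, Set.preimage_inter, Set.inter_comm]
    linarith
  have hsame : ∀ T T' : Set (Fin N → Bool), (∀ b, 0 < bw ν N (cnt b) → (b ∈ T ↔ b ∈ T')) →
      P.real (Bh ⁻¹' T) = P.real (Bh ⁻¹' T') := by
    intro T T' hTT
    rw [hsum, hsum]
    refine Finset.sum_congr rfl fun b _ => ?_
    rcases (hnn (cnt b)).eq_or_lt with h0 | h0
    · simp [← h0]
    · by_cases h1 : b ∈ T
      · simp [h1, (hTT b h0).1 h1]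
      · simp [h1, mt (hTT b h0).2 h1]
  have e1 := hsame S S' hSS
  have e2 := hsame (Zs ∩ S) (Zs ∩ S') fun b hb => and_congr_right fun _ => hSS b hb
  rw [hcompl, hdiff, ← e1, ← e2] at hfkg
  have hfin : P.real (Bh ⁻¹' (Zs ∩ S)) ≤ P.real (Bh ⁻¹' Zs) * P.real (Bh ⁻¹' S) := by linarith
  have hZ' : P (Bh ⁻¹' Zs) ≠ 0 := hZ
  rw [hMg]
  change P[|Bh ⁻¹' Zs] (Bh ⁻¹' S) ≤ P (Bh ⁻¹' S)
  rw [cond_apply hZm, ENNReal.inv_mul_le_iff hZ' (measure_ne_top _ _), ← Set.preimage_inter,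
    ← ENNReal.toReal_le_toReal (measure_ne_top _ _)
      (ENNReal.mul_ne_top (measure_ne_top _ _) (measure_ne_top _ _)), ENNReal.toReal_mul]
  exact hfin
end
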